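/- Let K be an algebraically closed field and n, m positive integers. Then β(S(n,m)) ≤ β(R(n,m+1)): if R(n,m+1) is generated by its homogeneous elements of degree ≤ D, then S(n,m) is generated by its homogeneous elements of degree ≤ D. -/

import Mathlib

open MvPolynomial Matrix

/-- Coordinate functions of an `m`-tuple of `n × n` matrices. -/
def matCoords {K : Type} [Field K] {n m : ℕ} (X : Fin m → Matrix (Fin n) (Fin n) K) :
    Fin m × Fin n × Fin n → K :=
  fun p => X p.1 p.2.1 p.2.2

/-- The ring of matrix semi-invariants `R(n,m) = K[Mat_{n,n}^m]^{SL_n × SL_n}`, where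
`(A,B)` acts by `(X_1, …, X_m) ↦ (A X_1 B⁻¹, …, A X_m B⁻¹)`. -/
noncomputable def matrixSemiInvariants (K : Type) [Field K] (n m : ℕ) :
    Subalgebra K (MvPolynomial (Fin m × Fin n × Fin n) K) :=
  ⨅ (A : SpecialLinearGroup (Fin n) K) (B : SpecialLinearGroup (Fin n) K)
    (X : Fin m → Matrix (Fin n) (Fin n) K),
      AlgHom.equalizer
        (aeval (matCoords fun i => A.val * X i * (B⁻¹).val))
        (aeval (matCoords X))

/-- The ring of matrix invariants `S(n,m) = K[Mat_{n,n}^m]^{GL_n}`, where `A` acts by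
simultaneous conjugation. -/
noncomputable def matrixInvariants (K : Type) [Field K] (n m : ℕ) :
    Subalgebra K (MvPolynomial (Fin m × Fin n × Fin n) K) :=
  ⨅ (A : GeneralLinearGroup (Fin n) K) (X : Fin m → Matrix (Fin n) (Fin n) K),
      AlgHom.equalizer
        (aeval (matCoords fun i => A.val * X i * (A⁻¹).val))
        (aeval (matCoords X))

/-!
Setting `X₀ = 1` maps `R(n,m+1)` to `S(n,m)`, and it does not raise degrees. It is onto: an
invariant `f` is the image of the semi-invariant `(X₀, …, Xₘ) ↦ f (adj X₀ X₁, …, adj X₀ Xₘ)`. So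
the images of the generators of degree `≤ D` generate `S(n,m)`, and over an infinite field their
homogeneous components again lie in `S(n,m)`.

Over an infinite field, invariance under conjugation by `SLₙ` implies invariance under `GLₙ`, even
when determinants have no `n`-th root: put an invertible `A` on a line `t ↦ A_t` of matrices with
`det A_t = t`. The identity `f (A_t X adj A_t) = f (t X)` is polynomial in `t` and holds whenever
`t` is a nonzero `n`-th power, hence always.
-/

section HomogeneousComponents

variable {R σ : Type*} [CommSemiring R]

lemma coeff_aeval_X_mul_C (x : σ → R) (f : MvPolynomial σ R) (d : ℕ) :
    (aeval (fun i => Polynomial.X * Polynomial.C (x i)) f).coeff d =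
      aeval x (homogeneousComponent d f) := by
  have aeval_monomial_eq (s : σ →₀ ℕ) :
      aeval (fun i => Polynomial.X * Polynomial.C (x i)) (monomial s (coeff s f)) =
        Polynomial.C (aeval x (monomial s (coeff s f))) * Polynomial.X ^ s.degree := by
    simp only [aeval_monomial, Finsupp.prod, mul_pow, Finset.prod_mul_distrib,
      Finset.prod_pow_eq_pow_sum, Finsupp.degree_apply, map_mul, map_prod, map_pow,
      Polynomial.algebraMap_eq, Algebra.algebraMap_self_apply]
    ring
  conv_lhs => rw [f.as_sum]
  simp only [homogeneousComponent_apply, map_sum, Polynomial.finsetSum_coeff, aeval_monomial_eq,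
    Polynomial.coeff_C_mul_X_pow, Finset.sum_filter]
  refine Finset.sum_congr rfl fun s _ => ?_
  simp only [apply_ite (aeval x), map_zero, eq_comm (a := d)]

lemma aeval_homogeneousComponent_congr {R : Type*} [CommRing R] [IsDomain R] [Infinite R]
    {x y : σ → R} {f : MvPolynomial σ R} (h : ∀ t : R, aeval (t • x) f = aeval (t • y) f) (d : ℕ) :
    aeval x (homogeneousComponent d f) = aeval y (homogeneousComponent d f) := by
  have eval_aeval (z : σ → R) (t : R) :
      (aeval (fun i => Polynomial.X * Polynomial.C (z i)) f).eval t = aeval (t • z) f := by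
    rw [← Polynomial.coe_aeval_eq_eval, comp_aeval_apply]
    simp only [map_mul, Polynomial.aeval_X, Polynomial.aeval_C, Algebra.algebraMap_self_apply]
    rfl
  rw [← coeff_aeval_X_mul_C, ← coeff_aeval_X_mul_C]
  congr 1
  exact Polynomial.funext fun t => by rw [eval_aeval, eval_aeval, h]

lemma mem_adjoin_isHomogeneous_of_totalDegree_le {S : Subalgebra R (MvPolynomial σ R)}
    (hS : ∀ f ∈ S, ∀ d, homogeneousComponent d f ∈ S) {f : MvPolynomial σ R} (hf : f ∈ S) {D : ℕ}
    (hfD : f.totalDegree ≤ D) :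
    f ∈ Algebra.adjoin R {g | g ∈ S ∧ ∃ d ≤ D, g.IsHomogeneous d} := by
  rw [← sum_homogeneousComponent f]
  refine Subalgebra.sum_mem _ fun d hd => Algebra.subset_adjoin ⟨hS f hf d, d, ?_,
    homogeneousComponent_isHomogeneous d f⟩
  exact (Nat.le_of_lt_succ (Finset.mem_range.mp hd)).trans hfD

lemma totalDegree_aeval_le {τ : Type*} {g : σ → MvPolynomial τ R} {k : ℕ}
    (hg : ∀ i, (g i).totalDegree ≤ k) (f : MvPolynomial σ R) :
    (aeval g f).totalDegree ≤ f.totalDegree * k := by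
  rw [aeval_def, eval₂_eq]
  refine (totalDegree_finsetSum _ _).trans (Finset.sup_le fun s hs => ?_)
  calc (algebraMap R _ (coeff s f) * ∏ i ∈ s.support, g i ^ s i).totalDegree
      ≤ 0 + ∑ i ∈ s.support, (g i ^ s i).totalDegree := by
        refine (totalDegree_mul _ _).trans (add_le_add ?_ (totalDegree_finsetProd _ _))
        rw [algebraMap_eq, totalDegree_C]
    _ ≤ (∑ i ∈ s.support, s i) * k := by
        rw [zero_add, Finset.sum_mul]
        exact Finset.sum_le_sum fun i _ => (totalDegree_pow _ _).trans
          (Nat.mul_le_mul_left _ (hg i))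
    _ ≤ f.totalDegree * k := Nat.mul_le_mul_right k (le_totalDegree hs)

end HomogeneousComponents

lemma polynomial_eq_of_eval_pow_eq {R : Type*} [CommRing R] [IsDomain R] [Infinite R] {n : ℕ}
    (hn : 0 < n) {p q : Polynomial R} (h : ∀ s ≠ 0, p.eval (s ^ n) = q.eval (s ^ n)) : p = q := by
  refine Polynomial.expand_injective hn (Polynomial.eq_of_infinite_eval_eq _ _ ?_)
  refine (Set.finite_singleton (0 : R)).infinite_compl.mono fun s hs => ?_
  simpa only [Set.mem_ofPred_eq, Polynomial.expand_eval] using h s hs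

section MatrixEvaluation

variable (R : Type*) [CommSemiring R] {ι ν : Type*}

/-- Evaluation of polynomial functions on tuples of matrices at a tuple with entries in an
`R`-algebra; for entries in `R` it is `aeval (matCoords M)`. -/
noncomputable def aevalMatrices {S : Type*} [CommSemiring S] [Algebra R S]
    (M : ι → Matrix ν ν S) : MvPolynomial (ι × ν × ν) R →ₐ[R] S :=
  aeval fun p => M p.1 p.2.1 p.2.2

variable (ι ν) in
/-- The tuple of generic matrices, whose entries are the coordinate functions. -/
noncomputable def genericMatrices : ι → Matrix ν ν (MvPolynomial (ι × ν × ν) R) :=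
  fun i => Matrix.of fun j k => X (i, j, k)

lemma aevalMatrices_genericMatrices (f : MvPolynomial (ι × ν × ν) R) :
    aevalMatrices R (genericMatrices R ι ν) f = f :=
  aeval_X_left_apply f

variable {R} {S : Type*} [CommSemiring S] [Algebra R S]

lemma map_aevalMatrices {T : Type*} [CommSemiring T] [Algebra R T] (g : S →ₐ[R] T)
    (M : ι → Matrix ν ν S) (f : MvPolynomial (ι × ν × ν) R) :
    g (aevalMatrices R M f) = aevalMatrices R (fun i => (M i).map g) f :=
  comp_aeval_apply _ g f

lemma genericMatrices_map_aevalMatrices (M : ι → Matrix ν ν S) (i : ι) :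
    (genericMatrices R ι ν i).map (aevalMatrices R M) = M i := by
  ext j k
  simp [genericMatrices, aevalMatrices]

end MatrixEvaluation

section SpecialLinearToGeneralLinear

variable {K ι ν : Type*} [Field K] [Fintype ν] [DecidableEq ν]

lemma exists_polynomial_matrix_det_eq_X [Nonempty ν] {A : Matrix ν ν K} (hA : A.det ≠ 0) :
    ∃ P : Matrix ν ν (Polynomial K),
      P.det = Polynomial.X ∧ P.map (Polynomial.aeval A.det) = A := by
  obtain ⟨i⟩ := ‹Nonempty ν›
  refine ⟨A.map Polynomial.C *
    diagonal (Function.update 1 i (Polynomial.C A.det⁻¹ * Polynomial.X)), ?_, ?_⟩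
  · have det_map_C : (A.map Polynomial.C).det = Polynomial.C A.det :=
      (RingHom.map_det Polynomial.C A).symm
    rw [det_mul, det_map_C, det_diagonal, Finset.prod_update_of_mem (Finset.mem_univ i)]
    simp only [Pi.one_apply, Finset.prod_const_one, mul_one]
    rw [← mul_assoc, ← Polynomial.C_mul, mul_inv_cancel₀ hA, Polynomial.C_1, one_mul]
  · ext j k
    obtain rfl | hk := eq_or_ne k i <;> simp [Matrix.mul_diagonal, *]

variable {f : MvPolynomial (ι × ν × ν) K}

lemma aevalMatrices_conj_of_det_eq_pow [Nonempty ν]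
    (hf : ∀ A : Matrix ν ν K, A.det = 1 → ∀ X : ι → Matrix ν ν K,
      aevalMatrices K (fun i => A * X i * adjugate A) f = aevalMatrices K X f)
    {A : Matrix ν ν K} {c : K} (hc : c ≠ 0) (hA : A.det = c ^ Fintype.card ν)
    (X : ι → Matrix ν ν K) :
    aevalMatrices K (fun i => A * X i * adjugate A) f = aevalMatrices K (A.det • X) f := by
  obtain ⟨B, rfl⟩ : ∃ B, A = c • B := ⟨c⁻¹ • A, (smul_inv_smul₀ hc A).symm⟩
  have hB : B.det = 1 := by
    rwa [det_smul, mul_eq_left₀ (pow_ne_zero _ hc)] at hA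
  rw [hA, ← hf B hB (c ^ Fintype.card ν • X)]
  congr 2 with i : 1
  simp only [Pi.smul_apply, adjugate_smul, Matrix.smul_mul, Matrix.mul_smul, smul_smul,
    pow_sub_one_mul Fintype.card_ne_zero]

lemma aevalMatrices_conj_of_forall_det_one [Infinite K]
    (hf : ∀ A : Matrix ν ν K, A.det = 1 → ∀ X : ι → Matrix ν ν K,
      aevalMatrices K (fun i => A * X i * adjugate A) f = aevalMatrices K X f)
    {A : Matrix ν ν K} (hA : A.det ≠ 0) (X : ι → Matrix ν ν K) :
    aevalMatrices K (fun i => A * X i * adjugate A) f = aevalMatrices K (A.det • X) f := by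
  cases isEmpty_or_nonempty ν
  · congr 2
    exact Subsingleton.elim _ _
  obtain ⟨P, hPdet, hPA⟩ := exists_polynomial_matrix_det_eq_X hA
  let conjX := aevalMatrices K (fun i => P * (X i).map Polynomial.C * adjugate P) f
  let smulX := aevalMatrices K
    (fun i => (Polynomial.X : Polynomial K) • (X i).map Polynomial.C) f
  have eval_conj (t : K) :
      conjX.eval t = aevalMatrices K (fun i => P.map (Polynomial.aeval t) * X i *
        adjugate (P.map (Polynomial.aeval t))) f := by
    rw [← Polynomial.coe_aeval_eq_eval, map_aevalMatrices]
    congr 2 with i : 1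
    rw [Matrix.map_mul, Matrix.map_mul, ← AlgHom.mapMatrix_apply _ (adjugate P),
      AlgHom.map_adjugate, AlgHom.mapMatrix_apply]
    congr 2
    ext j k
    simp
  have eval_smul (t : K) : smulX.eval t = aevalMatrices K (t • X) f := by
    rw [← Polynomial.coe_aeval_eq_eval, map_aevalMatrices]
    congr 2 with i j k
    simp [mul_comm t]
  have det_map (t : K) : (P.map (Polynomial.aeval t)).det = t := by
    rw [← AlgHom.mapMatrix_apply, ← AlgHom.map_det, hPdet, Polynomial.aeval_X]
  have conj_eq_smul : conjX = smulX :=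
    polynomial_eq_of_eval_pow_eq Fintype.card_pos fun s hs => by
      rw [eval_conj, aevalMatrices_conj_of_det_eq_pow hf hs (det_map _), det_map, eval_smul]
  rw [← eval_smul, ← conj_eq_smul, eval_conj, hPA]

end SpecialLinearToGeneralLinear

section Invariants

variable {K : Type} [Field K] {n m : ℕ}

lemma mem_matrixSemiInvariants_iff {f : MvPolynomial (Fin m × Fin n × Fin n) K} :
    f ∈ matrixSemiInvariants K n m ↔
      ∀ A B : Matrix (Fin n) (Fin n) K, A.det = 1 → B.det = 1 →
        ∀ X : Fin m → Matrix (Fin n) (Fin n) K,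
          aevalMatrices K (fun i => A * X i * adjugate B) f = aevalMatrices K X f := by
  simp only [matrixSemiInvariants, Algebra.mem_iInf, AlgHom.mem_equalizer]
  exact ⟨fun h A B hA hB => h ⟨A, hA⟩ ⟨B, hB⟩, fun h A B => h A.1 B.1 A.2 B.2⟩

-- Multiplying through by `det A` makes the condition polynomial in `A`.
lemma mem_matrixInvariants_iff {f : MvPolynomial (Fin m × Fin n × Fin n) K} :
    f ∈ matrixInvariants K n m ↔
      ∀ A : Matrix (Fin n) (Fin n) K, A.det ≠ 0 → ∀ X : Fin m → Matrix (Fin n) (Fin n) K,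
        aevalMatrices K (fun i => A * X i * adjugate A) f = aevalMatrices K (A.det • X) f := by
  have mul_det_smul_mul_inv (A : GeneralLinearGroup (Fin n) K) (Y : Matrix (Fin n) (Fin n) K) :
      A.val * (A.val.det • Y) * (A⁻¹).val = A.val * Y * adjugate A.val := by
    rw [coe_units_inv, inv_def, Ring.inverse_eq_inv', Matrix.mul_smul, Matrix.mul_smul,
      Matrix.smul_mul, inv_smul_smul₀ A.det_ne_zero]
  simp only [matrixInvariants, Algebra.mem_iInf, AlgHom.mem_equalizer]
  constructor
  · intro h A hA X
    obtain ⟨A, rfl⟩ : ∃ B : GeneralLinearGroup (Fin n) K, B.val = A :=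
      ⟨GeneralLinearGroup.mkOfDetNeZero A hA, rfl⟩
    have := h A (A.val.det • X)
    simp only [Pi.smul_apply, mul_det_smul_mul_inv] at this
    exact this
  · intro h A X
    have := h A.val A.det_ne_zero (A.val.det⁻¹ • X)
    simp only [← mul_det_smul_mul_inv, Pi.smul_apply, smul_inv_smul₀ A.det_ne_zero] at this
    exact this

lemma homogeneousComponent_mem_matrixInvariants [Infinite K]
    {f : MvPolynomial (Fin m × Fin n × Fin n) K} (hf : f ∈ matrixInvariants K n m) (d : ℕ) :
    homogeneousComponent d f ∈ matrixInvariants K n m := by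
  rw [mem_matrixInvariants_iff] at hf ⊢
  refine fun A hA X => aeval_homogeneousComponent_congr (fun t => ?_) d
  have h := hf A hA (t • X)
  rw [smul_comm] at h
  simp only [Pi.smul_apply, Matrix.mul_smul, Matrix.smul_mul] at h
  exact h

variable (K n m) in
/-- Restriction of polynomial functions of `(X₀, …, Xₘ)` to the subspace `X₀ = 1`. -/
noncomputable def setHeadOne :
    MvPolynomial (Fin (m + 1) × Fin n × Fin n) K →ₐ[K] MvPolynomial (Fin m × Fin n × Fin n) K :=
  aevalMatrices K (Fin.cons 1 (genericMatrices K (Fin m) (Fin n)))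

variable (K n m) in
/-- The pullback `f ↦ f (adj X₀ X₁, …, adj X₀ Xₘ)`. It is a section of `setHeadOne`; the adjugate
takes the place of `X₀⁻¹`, so that the result is again a polynomial. -/
noncomputable def adjugateHeadMul :
    MvPolynomial (Fin m × Fin n × Fin n) K →ₐ[K] MvPolynomial (Fin (m + 1) × Fin n × Fin n) K :=
  aevalMatrices K fun i => adjugate (genericMatrices K (Fin (m + 1)) (Fin n) 0) *
    genericMatrices K (Fin (m + 1)) (Fin n) i.succ

lemma aevalMatrices_setHeadOne (X : Fin m → Matrix (Fin n) (Fin n) K)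
    (h : MvPolynomial (Fin (m + 1) × Fin n × Fin n) K) :
    aevalMatrices K X (setHeadOne K n m h) =
      aevalMatrices K (Fin.cons 1 X : Fin (m + 1) → Matrix (Fin n) (Fin n) K) h := by
  rw [setHeadOne, map_aevalMatrices]
  congr 2 with i : 1
  cases i using Fin.cases with
  | zero => simp
  | succ i => simp [genericMatrices_map_aevalMatrices]

lemma aevalMatrices_adjugateHeadMul {S : Type*} [CommRing S] [Algebra K S]
    (X : Fin (m + 1) → Matrix (Fin n) (Fin n) S) (f : MvPolynomial (Fin m × Fin n × Fin n) K) :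
    aevalMatrices K X (adjugateHeadMul K n m f) =
      aevalMatrices K (fun i : Fin m => adjugate (X 0) * X i.succ) f := by
  rw [adjugateHeadMul, map_aevalMatrices]
  congr 2 with i : 1
  rw [Matrix.map_mul, ← AlgHom.mapMatrix_apply _ (adjugate _), AlgHom.map_adjugate,
    AlgHom.mapMatrix_apply, genericMatrices_map_aevalMatrices, genericMatrices_map_aevalMatrices]

lemma setHeadOne_adjugateHeadMul (f : MvPolynomial (Fin m × Fin n × Fin n) K) :
    setHeadOne K n m (adjugateHeadMul K n m f) = f := by
  rw [setHeadOne, aevalMatrices_adjugateHeadMul]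
  simp only [Fin.cons_zero, Fin.cons_succ, adjugate_one, Matrix.one_mul]
  exact aevalMatrices_genericMatrices K f

lemma totalDegree_setHeadOne_le (h : MvPolynomial (Fin (m + 1) × Fin n × Fin n) K) :
    (setHeadOne K n m h).totalDegree ≤ h.totalDegree := by
  refine (totalDegree_aeval_le (k := 1) (fun ⟨i, j, k⟩ => ?_) h).trans_eq (mul_one _)
  cases i using Fin.cases with
  | zero => obtain rfl | hjk := eq_or_ne j k <;> simp [*]
  | succ i => simp [genericMatrices]

lemma adjugateHeadMul_mem_matrixSemiInvariants {f : MvPolynomial (Fin m × Fin n × Fin n) K}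
    (hf : f ∈ matrixInvariants K n m) :
    adjugateHeadMul K n m f ∈ matrixSemiInvariants K n (m + 1) := by
  rw [mem_matrixInvariants_iff] at hf
  rw [mem_matrixSemiInvariants_iff]
  intro A B hA hB X
  have adjugate_adjugate_B : adjugate (adjugate B) = B := by
    simpa only [hB, one_smul, one_pow] using det_smul_adjugate_adjugate B
  have adjugate_mul_eq (i : Fin m) :
      adjugate (A * X 0 * adjugate B) * (A * X i.succ * adjugate B) =
        B * (adjugate (X 0) * X i.succ) * adjugate B := by
    calc adjugate (A * X 0 * adjugate B) * (A * X i.succ * adjugate B)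
        = B * (adjugate (X 0) * ((adjugate A * A) * X i.succ)) * adjugate B := by
          simp only [adjugate_mul_distrib, adjugate_adjugate_B, Matrix.mul_assoc]
      _ = B * (adjugate (X 0) * X i.succ) * adjugate B := by
          rw [adjugate_mul, hA, one_smul, Matrix.one_mul]
  simp only [aevalMatrices_adjugateHeadMul, adjugate_mul_eq]
  rw [hf B (by simp [hB]), hB, one_smul]

lemma setHeadOne_mem_matrixInvariants [Infinite K]
    {h : MvPolynomial (Fin (m + 1) × Fin n × Fin n) K}
    (hh : h ∈ matrixSemiInvariants K n (m + 1)) :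
    setHeadOne K n m h ∈ matrixInvariants K n m := by
  rw [mem_matrixSemiInvariants_iff] at hh
  rw [mem_matrixInvariants_iff]
  refine fun A hA => aevalMatrices_conj_of_forall_det_one (fun B hB X => ?_) hA
  rw [aevalMatrices_setHeadOne, aevalMatrices_setHeadOne, ← hh B B hB hB (Fin.cons 1 X)]
  congr 2 with i : 1
  cases i using Fin.cases with
  | zero => simp [mul_adjugate, hB]
  | succ i => simp

end Invariants

theorem stmt_17_general (K : Type) [Field K] [Infinite K] (n m D : ℕ)
    (hR : Algebra.adjoin K
        {f | f ∈ matrixSemiInvariants K n (m + 1) ∧ ∃ d ≤ D, f.IsHomogeneous d}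
      = matrixSemiInvariants K n (m + 1)) :
    Algebra.adjoin K
        {f | f ∈ matrixInvariants K n m ∧ ∃ d ≤ D, f.IsHomogeneous d}
      = matrixInvariants K n m := by
  refine le_antisymm (Algebra.adjoin_le fun f hf => hf.1) fun f hf => ?_
  have setHeadOne_mem : matrixSemiInvariants K n (m + 1) ≤
      (Algebra.adjoin K {f | f ∈ matrixInvariants K n m ∧ ∃ d ≤ D, f.IsHomogeneous d}).comap
        (setHeadOne K n m) := by
    rw [← hR]
    refine Algebra.adjoin_le fun h ⟨hh, d, hdD, hhd⟩ => ?_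
    exact mem_adjoin_isHomogeneous_of_totalDegree_le
      (fun _ hg => homogeneousComponent_mem_matrixInvariants hg)
      (setHeadOne_mem_matrixInvariants hh)
      ((totalDegree_setHeadOne_le h).trans (hhd.totalDegree_le.trans hdD))
  rw [← setHeadOne_adjugateHeadMul f]
  exact setHeadOne_mem (adjugateHeadMul_mem_matrixSemiInvariants hf)

/-- `β(S(n,m)) ≤ β(R(n,m+1))`: if `R(n,m+1)` is generated by its homogeneous
elements of degree `≤ D`, then so is `S(n,m)`. -/
theorem stmt_17 (K : Type) [Field K] [IsAlgClosed K] (n m : ℕ) (hn : 0 < n) (hm : 0 < m)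
    (D : ℕ)
    (hR : Algebra.adjoin K
        {f | f ∈ matrixSemiInvariants K n (m + 1) ∧ ∃ d ≤ D, f.IsHomogeneous d}
      = matrixSemiInvariants K n (m + 1)) :
    Algebra.adjoin K
        {f | f ∈ matrixInvariants K n m ∧ ∃ d ≤ D, f.IsHomogeneous d}
      = matrixInvariants K n m :=
  stmt_17_general K n m D hR
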